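/- Let n ≥ 0, let E = EuclideanSpace ℝ (Fin (n+1)), let W = ℝ × E × ℝ, and let Q be the quadratic form Q(λ, x, s) = 2λs + ‖x‖² on W. For any two vectors v, w ∈ W with Q(v) = 1 and Q(w) = 1, there exists a linear equivalence f : W ≃ W with Q(f(z)) = Q(z) for all z ∈ W and f(v) = w. (Hence the Möbius group acts transitively on the set of unit spacelike vectors, i.e. on the set of oriented hyperspheres of the conformal sphere.) -/

import Mathlib

/-- The Minkowski quadratic form `Q(λ, x, s) = 2λs + ‖x‖²` on `W = ℝ × E × ℝ`. -/
noncomputable def minkQ11 (n : ℕ) (w : ℝ × EuclideanSpace ℝ (Fin (n + 1)) × ℝ) : ℝ :=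
  2 * w.1 * w.2.2 + ‖w.2.1‖ ^ 2

/-!
If `Q v = Q w`, the reflection in the hyperplane orthogonal to `v - w` sends `v` to `w`, provided
`Q (v - w)` is a unit. If it is not, and if `4 Q v` is a unit of a local ring, the parallelogram
identity `Q (v - w) + Q (v + w) = 4 Q v` shows that `Q (v + w)` is a unit; the
reflection along `v + w = v - (-w)` then sends `v` to `-w`, and the reflection along `w` takes `-w`
on to `w`.
-/

section QuadraticMap

variable {R M N : Type*} [CommRing R] [AddCommGroup M] [AddCommGroup N] [Module R M] [Module R N]
  (Q : QuadraticMap R M N) (v w : M)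

theorem quadraticMap_sub : Q (v - w) = Q v + Q w - QuadraticMap.polar Q v w := by
  rw [sub_eq_add_neg, QuadraticMap.map_add Q, Q.map_neg, QuadraticMap.polar_neg_right,
    sub_eq_add_neg]

theorem quadraticMap_parallelogram : Q (v - w) + Q (v + w) = 2 • (Q v + Q w) := by
  rw [quadraticMap_sub, QuadraticMap.map_add Q, two_nsmul, sub_add_add_cancel]

theorem quadraticMap_polar_sub_left_of_eq {v w : M} (h : Q v = Q w) :
    QuadraticMap.polar Q (v - w) v = Q (v - w) := by
  have expansion := quadraticMap_sub Q v (v - w)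
  rw [sub_sub_cancel, ← h, add_sub_assoc, left_eq_add, sub_eq_zero] at expansion
  rw [QuadraticMap.polar_comm, expansion]

end QuadraticMap

section OrthogonalReflection

variable {R M : Type*} [CommRing R] [AddCommGroup M] [Module R M] (Q : QuadraticForm R M)

/-- The reflection `z ↦ z - Q(u)⁻¹ • polar Q u z • u` along a vector `u` with invertible `Q u`, as
an isometry of `Q`. Since `polar Q u u = 2 * Q u`, this is the usual reflection formula with the
factor `2` cancelled, so that `2` may be a zero divisor. -/
def orthogonalReflection (u : M) [Invertible (Q u)] : Q.IsometryEquiv Q where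
  toLinearEquiv := Module.reflection (x := u) (f := ⅟(Q u) • Q.polarBilin u) <| by
    simp [mul_left_comm _ (2 : R)]
  map_app' z := by
    set c := ⅟(Q u) * QuadraticMap.polar Q u z
    have c_mul : c * Q u = QuadraticMap.polar Q u z := by
      rw [mul_right_comm, invOf_mul_self, one_mul]
    change Q (z - c • u) = Q z
    rw [quadraticMap_sub, Q.map_smul, QuadraticMap.polar_smul_right, QuadraticMap.polar_comm Q z,
      smul_eq_mul, smul_eq_mul, mul_assoc, c_mul, add_sub_cancel_right]

theorem orthogonalReflection_apply (u z : M) [Invertible (Q u)] :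
    orthogonalReflection Q u z = z - (⅟(Q u) * QuadraticMap.polar Q u z) • u :=
  rfl

theorem orthogonalReflection_apply_neg_self (u : M) [Invertible (Q u)] :
    orthogonalReflection Q u (-u) = u := by
  rw [orthogonalReflection_apply, QuadraticMap.polar_neg_right, QuadraticMap.polar_self]
  simp [two_smul, add_smul, mul_add]

variable {Q} {v w : M}

theorem orthogonalReflection_sub_apply_left (h : Q v = Q w) [Invertible (Q (v - w))] :
    orthogonalReflection Q (v - w) v = w := by
  rw [orthogonalReflection_apply, quadraticMap_polar_sub_left_of_eq Q h, invOf_mul_self, one_smul,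
    sub_sub_cancel]

theorem isUnit_quadraticForm_sub_or_add [IsLocalRing R] [Invertible (2 : R)] (h : Q v = Q w)
    (hv : IsUnit (Q v)) : IsUnit (Q (v - w)) ∨ IsUnit (Q (v + w)) := by
  apply IsLocalRing.isUnit_or_isUnit_of_isUnit_add
  have two_isUnit : IsUnit (2 : R) := isUnit_of_invertible 2
  rw [quadraticMap_parallelogram, ← h, ← two_mul, two_nsmul, ← two_mul]
  exact two_isUnit.mul (two_isUnit.mul hv)

theorem stmt_11_general [IsLocalRing R] [Invertible (2 : R)] (h : Q v = Q w)
    (hv : IsUnit (Q v)) : ∃ f : Q.IsometryEquiv Q, f v = w := by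
  rcases isUnit_quadraticForm_sub_or_add h hv with hsub | hadd
  · let := hsub.invertible
    exact ⟨orthogonalReflection Q (v - w), orthogonalReflection_sub_apply_left h⟩
  · rw [← sub_neg_eq_add] at hadd
    let := hadd.invertible
    let := (h ▸ hv : IsUnit (Q w)).invertible
    refine ⟨(orthogonalReflection Q (v - -w)).trans (orthogonalReflection Q w), ?_⟩
    change orthogonalReflection Q w (orthogonalReflection Q (v - -w) v) = w
    rw [orthogonalReflection_sub_apply_left (by rw [h, Q.map_neg]),
      orthogonalReflection_apply_neg_self]

end OrthogonalReflection

/-- The form `minkQ11` as a bundled quadratic form, over any real inner product space `E`: the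
orthogonal sum of the hyperbolic plane and the squared norm. -/
noncomputable def minkowskiForm (E : Type*) [NormedAddCommGroup E] [InnerProductSpace ℝ E] :
    QuadraticForm ℝ (ℝ × E × ℝ) :=
  (2 : ℝ) • QuadraticMap.linMulLin (.fst ℝ ℝ (E × ℝ)) (.snd ℝ E ℝ ∘ₗ .snd ℝ ℝ (E × ℝ)) +
    (LinearMap.BilinMap.toQuadraticMap (innerₗ E)).comp (.fst ℝ E ℝ ∘ₗ .snd ℝ ℝ (E × ℝ))

theorem minkowskiForm_apply_eq_minkQ11 (n : ℕ) (z : ℝ × EuclideanSpace ℝ (Fin (n + 1)) × ℝ) :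
    minkowskiForm (EuclideanSpace ℝ (Fin (n + 1))) z = minkQ11 n z := by
  simp [minkowskiForm, minkQ11, mul_assoc]

/-- the orthogonal group of the Minkowski form acts transitively on
unit spacelike vectors (i.e. on the oriented hyperspheres of the conformal sphere). -/
theorem stmt_11 (n : ℕ) (v w : ℝ × EuclideanSpace ℝ (Fin (n + 1)) × ℝ)
    (hQv : minkQ11 n v = 1) (hQw : minkQ11 n w = 1) :
    ∃ f : (ℝ × EuclideanSpace ℝ (Fin (n + 1)) × ℝ) ≃ₗ[ℝ]
        (ℝ × EuclideanSpace ℝ (Fin (n + 1)) × ℝ),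
      (∀ z : ℝ × EuclideanSpace ℝ (Fin (n + 1)) × ℝ, minkQ11 n (f z) = minkQ11 n z) ∧
      f v = w := by
  simp only [← minkowskiForm_apply_eq_minkQ11] at hQv hQw ⊢
  obtain ⟨f, hf⟩ := stmt_11_general (hQv.trans hQw.symm) (hQv ▸ isUnit_one)
  exact ⟨f.toLinearEquiv, f.map_app, hf⟩
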